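/- Let A, B be real symmetric n×n matrices, α₁,...,αₙ the eigenvalues of A with orthonormal eigenvectors ξ₁,...,ξₙ. Let λ be an eigenvalue of B with unit eigenvector v. For each k set η_k := min_{j≠k} |λ − α_j|. Then η_k²·(1 − ⟨v,ξ_k⟩²) ≤ ‖B−A‖_F² for all k, where ‖·‖_F is the Frobenius norm. -/

import Mathlib

/-!
Expand the residual `(B - A) v = λ v - A v` in the orthonormal eigenbasis `ξ` of `A`: its `j`-th
coordinate is `(λ - α_j) ⟨ξ_j, v⟩`. The coordinates with `j ≠ k` are thus at least `η_k` times those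
of `v` in absolute value, and the squared norms of the latter sum to `1 - ⟨v, ξ_k⟩²`. On the other
side, the Frobenius norm dominates the operator norm, so `‖(B - A) v‖ ≤ ‖B - A‖_F`.
-/

open Finset Matrix WithLp
open scoped InnerProductSpace

section Residual

variable {𝕜 E ι : Type*} [RCLike 𝕜] [NormedAddCommGroup E] [InnerProductSpace 𝕜 E] [Fintype ι]
  {T : E →ₗ[𝕜] E} {b : OrthonormalBasis ι 𝕜 E} {α : ι → 𝕜}

lemma inner_apply_of_apply_eq_smul (hT : ∀ j, T (b j) = α j • b j) (x : E) (j : ι) :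
    ⟪b j, T x⟫_𝕜 = α j * ⟪b j, x⟫_𝕜 := by
  classical
  calc ⟪b j, T x⟫_𝕜 = ⟪b j, T (∑ i, ⟪b i, x⟫_𝕜 • b i)⟫_𝕜 := by rw [b.sum_repr']
    _ = α j * ⟪b j, x⟫_𝕜 := by
      simp [hT, inner_sum, inner_smul_right, b.inner_eq_ite, mul_comm]

lemma sq_mul_sum_sq_norm_inner_le_sq_norm_smul_sub (hT : ∀ j, T (b j) = α j • b j) {c : 𝕜}
    {s : Finset ι} {η : ℝ} (hη₀ : 0 ≤ η) (hη : ∀ j ∈ s, η ≤ ‖c - α j‖) (x : E) :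
    η ^ 2 * ∑ j ∈ s, ‖⟪b j, x⟫_𝕜‖ ^ 2 ≤ ‖c • x - T x‖ ^ 2 := by
  have coord (j : ι) : ⟪b j, c • x - T x⟫_𝕜 = (c - α j) * ⟪b j, x⟫_𝕜 := by
    rw [inner_sub_right, inner_smul_right, inner_apply_of_apply_eq_smul hT, sub_mul]
  calc η ^ 2 * ∑ j ∈ s, ‖⟪b j, x⟫_𝕜‖ ^ 2
      = ∑ j ∈ s, (η * ‖⟪b j, x⟫_𝕜‖) ^ 2 := by simp only [mul_sum, mul_pow]
    _ ≤ ∑ j ∈ s, ‖⟪b j, c • x - T x⟫_𝕜‖ ^ 2 := by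
      gcongr with j hj
      rw [coord, norm_mul]
      gcongr
      exact hη j hj
    _ ≤ ‖c • x - T x‖ ^ 2 := b.orthonormal.sum_inner_products_le _

lemma sum_erase_sq_norm_inner [DecidableEq ι] (b : OrthonormalBasis ι 𝕜 E) (x : E) (k : ι) :
    ∑ j ∈ univ.erase k, ‖⟪b j, x⟫_𝕜‖ ^ 2 = ‖x‖ ^ 2 - ‖⟪b k, x⟫_𝕜‖ ^ 2 := by
  rw [sum_erase_eq_sub (mem_univ k), b.sum_sq_norm_inner_right]

end Residual

lemma sum_sq_norm_mulVec_le {R m n : Type*} [NonUnitalSeminormedRing R] [Fintype m] [Fintype n]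
    (M : Matrix m n R) (v : n → R) :
    ∑ i, ‖(M *ᵥ v) i‖ ^ 2 ≤ (∑ i, ∑ j, ‖M i j‖ ^ 2) * ∑ j, ‖v j‖ ^ 2 := by
  rw [sum_mul]
  gcongr with i
  calc ‖(M *ᵥ v) i‖ ^ 2 ≤ (∑ j, ‖M i j‖ * ‖v j‖) ^ 2 := by
        gcongr
        exact norm_sum_le_of_le _ fun j _ => norm_mul_le _ _
    _ ≤ (∑ j, ‖M i j‖ ^ 2) * ∑ j, ‖v j‖ ^ 2 := sum_mul_sq_le_sq_mul_sq _ _ _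

lemma exists_orthonormalBasis_eq_toLp {𝕜 ι : Type*} [RCLike 𝕜] [Fintype ι] [DecidableEq ι]
    {ξ : ι → ι → 𝕜} (hξ : ∀ j k, star (ξ j) ⬝ᵥ ξ k = if j = k then 1 else 0) :
    ∃ b : OrthonormalBasis ι 𝕜 (EuclideanSpace 𝕜 ι), ∀ j, b j = toLp 2 (ξ j) := by
  have orthonormal : Orthonormal 𝕜 fun j => toLp 2 (ξ j) := orthonormal_iff_ite.mpr fun j k => by
    rw [EuclideanSpace.inner_toLp_toLp, dotProduct_comm, hξ]
  have spans : ⊤ ≤ Submodule.span 𝕜 (Set.range fun j => toLp 2 (ξ j)) :=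
    (orthonormal.linearIndependent.span_eq_top_of_card_eq_finrank' finrank_euclideanSpace.symm).ge
  exact ⟨.mk orthonormal spans, fun j => by rw [OrthonormalBasis.coe_mk]⟩

theorem stmt_12_general {𝕜 ι : Type*} [RCLike 𝕜] [Fintype ι] [DecidableEq ι] {A B : Matrix ι ι 𝕜}
    {α : ι → 𝕜} {ξ : ι → ι → 𝕜} (heig : ∀ j, A *ᵥ ξ j = α j • ξ j)
    (horth : ∀ j k, star (ξ j) ⬝ᵥ ξ k = if j = k then 1 else 0) {lam : 𝕜} {v : ι → 𝕜}
    (hv : B *ᵥ v = lam • v) (hvnorm : ∑ i, ‖v i‖ ^ 2 = 1) {k : ι}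
    (hne : (univ.erase k).Nonempty) :
    (univ.erase k).inf' hne (fun j => ‖lam - α j‖) ^ 2 * (1 - ‖star (ξ k) ⬝ᵥ v‖ ^ 2) ≤
      ∑ i, ∑ j, ‖(B - A) i j‖ ^ 2 := by
  obtain ⟨b, hb⟩ := exists_orthonormalBasis_eq_toLp horth
  set x : EuclideanSpace 𝕜 ι := toLp 2 v
  set η := (univ.erase k).inf' hne fun j => ‖lam - α j‖
  have eigenbasis (j : ι) : toEuclideanLin A (b j) = α j • b j := by
    rw [hb, toLpLin_toLp, toLin'_apply, heig, toLp_smul]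
  have residual : lam • x - toEuclideanLin A x = toLp 2 ((B - A) *ᵥ v) := by
    rw [toLpLin_toLp, toLin'_apply, sub_mulVec, hv, toLp_sub, toLp_smul]
  have outside : ∑ j ∈ univ.erase k, ‖⟪b j, x⟫_𝕜‖ ^ 2 = 1 - ‖star (ξ k) ⬝ᵥ v‖ ^ 2 := by
    rw [sum_erase_sq_norm_inner, EuclideanSpace.norm_sq_eq, hvnorm, hb,
      EuclideanSpace.inner_toLp_toLp, dotProduct_comm]
  calc η ^ 2 * (1 - ‖star (ξ k) ⬝ᵥ v‖ ^ 2)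
      ≤ ‖lam • x - toEuclideanLin A x‖ ^ 2 := by
        rw [← outside]
        exact sq_mul_sum_sq_norm_inner_le_sq_norm_smul_sub eigenbasis
          (le_inf' _ _ fun _ _ => norm_nonneg _) (fun _ hj => inf'_le _ hj) x
    _ = ∑ i, ‖((B - A) *ᵥ v) i‖ ^ 2 := by rw [residual, EuclideanSpace.norm_sq_eq]
    _ ≤ ∑ i, ∑ j, ‖(B - A) i j‖ ^ 2 := by
        simpa only [hvnorm, mul_one] using sum_sq_norm_mulVec_le (B - A) v

/-- Perturbation bound: `η_k²·(1 − ⟨v,ξ_k⟩²) ≤ ‖B−A‖_F²`. -/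
theorem stmt_12 (n : ℕ) (hn : 2 ≤ n) (A B : Matrix (Fin n) (Fin n) ℝ)
    (hA : A.IsSymm) (hB : B.IsSymm)
    (α : Fin n → ℝ) (ξ : Fin n → (Fin n → ℝ))
    (heig : ∀ j, A.mulVec (ξ j) = α j • ξ j)
    (horth : ∀ j k, ∑ i, ξ j i * ξ k i = if j = k then (1 : ℝ) else 0)
    (lam : ℝ) (v : Fin n → ℝ)
    (hv : B.mulVec v = lam • v) (hvnorm : ∑ i, v i ^ 2 = 1)
    (hne : ∀ k : Fin n, (Finset.univ.erase k).Nonempty) :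
    ∀ k : Fin n,
      ((Finset.univ.erase k).inf' (hne k) (fun j => |lam - α j|)) ^ 2 *
          (1 - (∑ i, v i * ξ k i) ^ 2) ≤
        ∑ i : Fin n, ∑ j : Fin n, (B - A) i j ^ 2 := by
  intro k
  simpa [dotProduct, mul_comm (v _)] using
    stmt_12_general heig horth hv (by simpa using hvnorm) (hne k)
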